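/- Let d = 1 or d = 2. Then there exists a real number B > 1 such that for every real x > 1 there is a prime element α of ℤ[√−d] whose norm N(α) = |α|² satisfies x ≤ N(α) ≤ B·x. -/

import Mathlib

/-!
Let `χ` be a real character whose partial sums are nonnegative. Partial summation gives
`∑_{k ≤ N} χ(k)/k ≥ 1/2` for `N ≥ 1` and `∑_{n ≤ N} χ(n) log n / n = O(1)`. Since
`χ · log = (χ · Λ) * χ`, the second sum is
`(∑_{m ≤ N} χ(m) Λ(m)/m) (∑_{k ≤ N} χ(k)/k) + O(1)`, so `∑_{m ≤ N} χ(m) Λ(m)/m = O(1)`.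
Adding Mertens' estimate `∑_{m ≤ N} Λ(m)/m = log N + O(1)` yields
`∑_{N < m ≤ KN} (1 + χ(m)) Λ(m)/m = log K + O(1)`. For large `K` this exceeds the bounded
contribution of the proper prime powers, so some prime `p ∈ (N, KN]` has `χ(p) ≠ -1`.

For the quadratic characters of `ℚ(√-1)` and `ℚ(√-2)`, which have nonnegative partial sums, such a
`p` is a norm from `ℤ[√-d]`, and an element whose norm is a rational prime is prime.
-/

section AbelSummation

open Finset

variable {a A g : ℕ → ℝ} {M : ℝ} {m n : ℕ}

theorem le_sum_Ioc_mul_of_antitoneOn (hA : ∀ k, A (k + 1) = A k + a (k + 1)) (hA₀ : ∀ k, 0 ≤ A k)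
    (hg : AntitoneOn g (Set.Ioi m)) (hmn : m ≤ n) :
    A n * g (n + 1) - A m * g (m + 1) ≤ ∑ k ∈ Ioc m n, a k * g k := by
  induction n, hmn using Nat.le_induction with
  | base => simp
  | succ n hn ih =>
    have hdecr : A (n + 1) * g (n + 1 + 1) ≤ A (n + 1) * g (n + 1) :=
      mul_le_mul_of_nonneg_left
        (hg (Set.mem_Ioi.2 (by lia)) (Set.mem_Ioi.2 (by lia)) (by lia)) (hA₀ _)
    have hstep : A (n + 1) * g (n + 1) = A n * g (n + 1) + a (n + 1) * g (n + 1) := by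
      rw [hA, add_mul]
    rw [sum_Ioc_succ_top hn]
    linarith

theorem abs_sum_Ioc_mul_le_of_antitoneOn (ha : ∀ n, ∑ k ∈ Ioc 0 n, a k ∈ Set.Icc 0 M)
    (hg : AntitoneOn g (Set.Ioi m)) (hg₀ : ∀ k, m < k → 0 ≤ g k) (hmn : m ≤ n) :
    |∑ k ∈ Ioc m n, a k * g k| ≤ M * g (m + 1) := by
  set A : ℕ → ℝ := fun n ↦ ∑ k ∈ Ioc 0 n, a k
  have hA_succ (k : ℕ) : A (k + 1) = A k + a (k + 1) := sum_Ioc_succ_top k.zero_le a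
  have hlower := le_sum_Ioc_mul_of_antitoneOn hA_succ (fun k ↦ (ha k).1) hg hmn
  -- The upper bound is the lower bound for `-a`, which has the nonnegative primitive `M - A`.
  have hupper := le_sum_Ioc_mul_of_antitoneOn (a := fun k ↦ -a k) (A := fun k ↦ M - A k)
    (fun k ↦ by rw [hA_succ]; ring) (fun k ↦ sub_nonneg.2 (ha k).2) hg hmn
  simp only [neg_mul, sum_neg_distrib] at hupper
  have hgm := hg₀ (m + 1) (by lia)
  have hgn := hg₀ (n + 1) (by lia)
  have hAm_nonneg := mul_nonneg (ha m).1 hgm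
  have hAn_nonneg := mul_nonneg (ha n).1 hgn
  have hAm_le := mul_le_mul_of_nonneg_right (ha m).2 hgm
  have hAn_le := mul_le_mul_of_nonneg_right (ha n).2 hgn
  exact abs_le.2 ⟨by linarith, by linarith⟩

theorem exists_abs_sum_Ioc_mul_le_of_antitoneOn (ha : ∀ n, ∑ k ∈ Ioc 0 n, a k ∈ Set.Icc 0 M)
    (hg : AntitoneOn g (Set.Ioi m)) (hg₀ : ∀ k, m < k → 0 ≤ g k) :
    ∃ C, ∀ n, |∑ k ∈ Ioc 0 n, a k * g k| ≤ C := by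
  have htail : 0 ≤ M * g (m + 1) :=
    mul_nonneg ((ha 0).1.trans (ha 0).2) (hg₀ _ m.lt_succ_self)
  refine ⟨∑ k ∈ Ioc 0 m, |a k * g k| + M * g (m + 1), fun n ↦ ?_⟩
  rcases le_total m n with hmn | hnm
  · rw [← sum_Ioc_consecutive _ m.zero_le hmn]
    exact (abs_add_le _ _).trans
      (add_le_add (abs_sum_le_sum_abs _ _) (abs_sum_Ioc_mul_le_of_antitoneOn ha hg hg₀ hmn))
  · calc |∑ k ∈ Ioc 0 n, a k * g k| ≤ ∑ k ∈ Ioc 0 n, |a k * g k| := abs_sum_le_sum_abs _ _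
      _ ≤ ∑ k ∈ Ioc 0 m, |a k * g k| :=
        sum_le_sum_of_subset_of_nonneg (Ioc_subset_Ioc_right hnm) fun _ _ _ ↦ abs_nonneg _
      _ ≤ ∑ k ∈ Ioc 0 m, |a k * g k| + M * g (m + 1) := le_add_of_nonneg_right htail

theorem antitoneOn_natCast_inv : AntitoneOn (fun k : ℕ ↦ (k : ℝ)⁻¹) (Set.Ioi m) := by
  intro i hi j _ hij
  have : (0 : ℝ) < i := by exact_mod_cast m.zero_le.trans_lt hi
  dsimp only
  gcongr

theorem antitoneOn_log_natCast_div_natCast :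
    AntitoneOn (fun k : ℕ ↦ Real.log k / k) (Set.Ioi 2) := by
  have hexp_le {k : ℕ} (hk : 2 < k) : Real.exp 1 ≤ k := by
    have : (3 : ℝ) ≤ k := by exact_mod_cast hk
    linarith [Real.exp_one_lt_d9]
  exact fun i hi j hj hij ↦
    Real.log_div_self_antitoneOn (hexp_le hi) (hexp_le hj) (by exact_mod_cast hij)

end AbelSummation

section VonMangoldt

open ArithmeticFunction ArithmeticFunction.zeta Finset

theorem sum_Ioc_vonMangoldt_le (N : ℕ) : ∑ m ∈ Ioc 0 N, Λ m ≤ (Real.log 4 + 4) * N := by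
  simpa [Chebyshev.psi] using Chebyshev.psi_le_const_mul_self (x := N) N.cast_nonneg

theorem sum_Ioc_log_eq_log_factorial (N : ℕ) :
    ∑ n ∈ Ioc 0 N, Real.log n = Real.log N.factorial := by
  induction N with
  | zero => simp
  | succ N ih =>
    rw [sum_Ioc_succ_top N.zero_le, ih, Nat.factorial_succ, Nat.cast_mul,
      Real.log_mul (by positivity) (by positivity), add_comm]

theorem sum_Ioc_vonMangoldt_mul_div_eq_log_factorial (N : ℕ) :
    ∑ m ∈ Ioc 0 N, Λ m * ((N / m : ℕ) : ℝ) = Real.log N.factorial := by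
  rw [← sum_Ioc_mul_zeta_eq_sum, vonMangoldt_mul_zeta, ← sum_Ioc_log_eq_log_factorial]
  exact sum_congr rfl fun _ _ ↦ log_apply

theorem abs_sum_Ioc_vonMangoldt_div_sub_log_le {N : ℕ} (hN : N ≠ 0) :
    |∑ m ∈ Ioc 0 N, Λ m / m - Real.log N| ≤ Real.log 4 + 4 := by
  have hN_pos : (0 : ℝ) < N := by positivity
  have hfloor : ∑ m ∈ Ioc 0 N, Λ m * ((N / m : ℕ) : ℝ) ≤ N * ∑ m ∈ Ioc 0 N, Λ m / m := by
    rw [mul_sum]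
    refine sum_le_sum fun m _ ↦ ?_
    calc Λ m * ((N / m : ℕ) : ℝ) ≤ Λ m * (N / m) :=
          mul_le_mul_of_nonneg_left Nat.cast_div_le vonMangoldt_nonneg
      _ = N * (Λ m / m) := by ring
  have hceil : N * ∑ m ∈ Ioc 0 N, Λ m / m ≤
      ∑ m ∈ Ioc 0 N, Λ m * ((N / m : ℕ) : ℝ) + ∑ m ∈ Ioc 0 N, Λ m := by
    rw [mul_sum, ← sum_add_distrib]
    refine sum_le_sum fun m _ ↦ ?_
    calc N * (Λ m / m) = Λ m * (N / m) := by ring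
      _ ≤ Λ m * ((N / m : ℕ) + 1) := by
        refine mul_le_mul_of_nonneg_left ?_ vonMangoldt_nonneg
        simpa only [Nat.floor_div_eq_div] using (Nat.lt_floor_add_one ((N : ℝ) / m)).le
      _ = Λ m * ((N / m : ℕ) : ℝ) + Λ m := by ring
  rw [sum_Ioc_vonMangoldt_mul_div_eq_log_factorial] at hfloor hceil
  have hfact_le : Real.log N.factorial ≤ N * Real.log N := by
    rw [← Real.log_pow]
    exact Real.log_le_log (by positivity) (by exact_mod_cast N.factorial_le_pow)
  have hle_fact : N * Real.log N - N ≤ Real.log N.factorial := by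
    have hlog_pi : 0 ≤ Real.log (2 * Real.pi) := Real.log_nonneg (by linarith [Real.pi_gt_three])
    linarith [Stirling.le_log_factorial_stirling hN, Real.log_natCast_nonneg N]
  have hpsi := sum_Ioc_vonMangoldt_le N
  have hlog_four : 0 ≤ Real.log 4 := Real.log_nonneg (by norm_num)
  rw [abs_le]
  constructor <;> refine le_of_mul_le_mul_left ?_ hN_pos
  · nlinarith
  · linarith

theorem summable_vonMangoldt_div_of_not_prime :
    Summable fun n : ℕ ↦ if n.Prime then 0 else Λ n / n := by
  refine (vonMangoldt.summable_residueClass_non_primes_div (q := 1) 0).congr fun n ↦ ?_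
  have hres : vonMangoldt.residueClass (0 : ZMod 1) n = Λ n := by
    rw [vonMangoldt.residueClass, Set.indicator_of_mem]
    exact Subsingleton.elim _ _
  rw [hres, ite_div, zero_div]

theorem pmul_mul_pmul_of_map_mul {R : Type*} [CommSemiring R] {g : ArithmeticFunction R}
    (hg : ∀ m n, g (m * n) = g m * g n) (u v : ArithmeticFunction R) :
    pmul g u * pmul g v = pmul g (u * v) := by
  ext n
  simp only [mul_apply, pmul_apply, mul_sum]
  refine sum_congr rfl fun x hx ↦ ?_
  rw [← (Nat.mem_divisorsAntidiagonal.1 hx).1, hg, mul_mul_mul_comm]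

theorem sum_Ioc_mul_log_eq_of_map_mul {g : ArithmeticFunction ℝ}
    (hg : ∀ m n, g (m * n) = g m * g n) (N : ℕ) :
    ∑ n ∈ Ioc 0 N, g n * Real.log n =
      ∑ m ∈ Ioc 0 N, g m * Λ m * ∑ k ∈ Ioc 0 (N / m), g k := by
  have hconv : pmul g Λ * g = pmul g log := by
    simpa only [pmul_zeta, vonMangoldt_mul_zeta] using pmul_mul_pmul_of_map_mul hg Λ ↑ζ
  simpa only [hconv, pmul_apply, log_apply] using sum_Ioc_mul_eq_sum_sum (pmul g Λ) g N

end VonMangoldt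

section CompletelyMultiplicative

open ArithmeticFunction.vonMangoldt Finset

variable {f : ℕ →*₀ ℝ} {M : ℝ}

theorem abs_le_one_of_forall_abs_le (hf : ∀ n, |f n| ≤ M) (n : ℕ) : |f n| ≤ 1 := by
  by_contra! hn
  obtain ⟨k, hk⟩ := pow_unbounded_of_one_lt M hn
  rw [← abs_pow, ← map_pow] at hk
  exact (hf _).not_gt hk

theorem abs_le_one_of_sum_mem_Icc (hf : ∀ n, ∑ k ∈ Ioc 0 n, f k ∈ Set.Icc 0 M) (n : ℕ) :
    |f n| ≤ 1 := by
  refine abs_le_one_of_forall_abs_le (M := M) (fun n ↦ ?_) n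
  cases n with
  | zero => simpa using (hf 0).1.trans (hf 0).2
  | succ n =>
    have hsucc := sum_Ioc_succ_top n.zero_le f
    exact abs_le.2 ⟨by linarith [(hf n).2, (hf (n + 1)).1], by linarith [(hf n).1, (hf (n + 1)).2]⟩

theorem abs_sum_div_sub_sum_div_le (hf : ∀ n, ∑ k ∈ Ioc 0 n, f k ∈ Set.Icc 0 M) {m n : ℕ}
    (hmn : m ≤ n) :
    |∑ k ∈ Ioc 0 n, f k / k - ∑ k ∈ Ioc 0 m, f k / k| ≤ M / (m + 1) := by
  rw [← sum_Ioc_consecutive _ m.zero_le hmn, add_sub_cancel_left]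
  simpa only [div_eq_mul_inv, Nat.cast_succ] using
    abs_sum_Ioc_mul_le_of_antitoneOn hf antitoneOn_natCast_inv
      (fun k _ ↦ inv_nonneg.2 k.cast_nonneg) hmn

theorem one_half_le_sum_div (hf : ∀ n, 0 ≤ ∑ k ∈ Ioc 0 n, f k) {n : ℕ} (hn : 1 ≤ n) :
    1 / 2 ≤ ∑ k ∈ Ioc 0 n, f k / k := by
  have htail := le_sum_Ioc_mul_of_antitoneOn (fun k ↦ sum_Ioc_succ_top k.zero_le f) hf
    antitoneOn_natCast_inv hn
  have hnonneg : 0 ≤ (∑ k ∈ Ioc 0 n, f k) * ((n + 1 : ℕ) : ℝ)⁻¹ := mul_nonneg (hf n) (by positivity)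
  have hIoc : Ioc 0 1 = {1} := rfl
  rw [← sum_Ioc_consecutive _ zero_le_one hn]
  norm_num [hIoc, ← div_eq_mul_inv] at htail hnonneg ⊢
  linarith

theorem exists_abs_sum_mul_log_div_le (hf : ∀ n, ∑ k ∈ Ioc 0 n, f k ∈ Set.Icc 0 M) :
    ∃ C, ∀ N : ℕ, |∑ n ∈ Ioc 0 N, f n / n * Real.log n| ≤ C := by
  obtain ⟨C, hC⟩ := exists_abs_sum_Ioc_mul_le_of_antitoneOn hf antitoneOn_log_natCast_div_natCast
    fun k _ ↦ by positivity
  refine ⟨C, fun N ↦ ?_⟩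
  simpa only [div_mul_eq_mul_div, mul_div_assoc] using hC N

theorem abs_sum_mul_vonMangoldt_mul_sub_le (hf : ∀ n, ∑ k ∈ Ioc 0 n, f k ∈ Set.Icc 0 M)
    (N : ℕ) :
    |(∑ m ∈ Ioc 0 N, f m * Λ m / m) * ∑ k ∈ Ioc 0 N, f k / k -
      ∑ n ∈ Ioc 0 N, f n / n * Real.log n| ≤ M * (Real.log 4 + 4) := by
  have hM : 0 ≤ M := (hf 0).1.trans (hf 0).2
  let g : ArithmeticFunction ℝ := ⟨fun n ↦ f n / n, by simp⟩
  have hconv : ∑ n ∈ Ioc 0 N, f n / n * Real.log n =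
      ∑ m ∈ Ioc 0 N, f m / m * Λ m * ∑ k ∈ Ioc 0 (N / m), f k / k :=
    sum_Ioc_mul_log_eq_of_map_mul (g := g) (fun m n ↦ by simp [g, mul_div_mul_comm]) N
  have hterm (m : ℕ) (hm : m ∈ Ioc 0 N) :
      |f m * Λ m / m * ∑ k ∈ Ioc 0 N, f k / k -
        f m / m * Λ m * ∑ k ∈ Ioc 0 (N / m), f k / k| ≤ M / N * Λ m := by
    obtain ⟨hm_pos, hmN⟩ := mem_Ioc.1 hm
    have hm_pos' : (0 : ℝ) < m := by exact_mod_cast hm_pos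
    have hN_pos : (0 : ℝ) < N := by exact_mod_cast hm_pos.trans_le hmN
    have hquot : (N : ℝ) / m ≤ (N / m : ℕ) + 1 := by
      simpa only [Nat.floor_div_eq_div] using (Nat.lt_floor_add_one ((N : ℝ) / m)).le
    have htail : |∑ k ∈ Ioc 0 N, f k / k - ∑ k ∈ Ioc 0 (N / m), f k / k| ≤ M / (N / m) :=
      (abs_sum_div_sub_sum_div_le hf (Nat.div_le_self N m)).trans (by gcongr)
    calc _ = |f m| * (Λ m / m * |∑ k ∈ Ioc 0 N, f k / k - ∑ k ∈ Ioc 0 (N / m), f k / k|) := by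
          rw [← abs_of_nonneg (div_nonneg ArithmeticFunction.vonMangoldt_nonneg hm_pos'.le :
            0 ≤ Λ m / m), ← abs_mul, ← abs_mul]
          ring_nf
      _ ≤ 1 * (Λ m / m * (M / (N / m))) := by
          have := ArithmeticFunction.vonMangoldt_nonneg (n := m)
          gcongr
          exact abs_le_one_of_sum_mem_Icc hf m
      _ = M / N * Λ m := by field_simp
  rw [hconv, sum_mul, ← sum_sub_distrib]
  calc _ ≤ ∑ m ∈ Ioc 0 N, M / N * Λ m := (abs_sum_le_sum_abs _ _).trans (sum_le_sum hterm)
    _ ≤ M / N * ((Real.log 4 + 4) * N) := by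
      rw [← mul_sum]
      gcongr
      exact sum_Ioc_vonMangoldt_le N
    _ = M * (Real.log 4 + 4) * (N / N) := by ring
    _ ≤ M * (Real.log 4 + 4) := mul_le_of_le_one_right (by positivity) (div_self_le_one _)

theorem exists_abs_sum_mul_vonMangoldt_div_le
    (hf : ∀ n, ∑ k ∈ Ioc 0 n, f k ∈ Set.Icc 0 M) :
    ∃ C, ∀ N : ℕ, |∑ m ∈ Ioc 0 N, f m * Λ m / m| ≤ C := by
  obtain ⟨C, hC⟩ := exists_abs_sum_mul_log_div_le hf
  refine ⟨2 * (C + M * (Real.log 4 + 4)), fun N ↦ ?_⟩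
  rcases N.eq_zero_or_pos with rfl | hN
  · simpa using (abs_nonneg _).trans ((abs_sum_mul_vonMangoldt_mul_sub_le hf 0).trans
      (le_add_of_nonneg_left ((abs_nonneg _).trans (hC 0))))
  set S := ∑ m ∈ Ioc 0 N, f m * Λ m / m
  set T := ∑ k ∈ Ioc 0 N, f k / k
  set L := ∑ n ∈ Ioc 0 N, f n / n * Real.log n
  have hT : 1 / 2 ≤ T := one_half_le_sum_div (fun n ↦ (hf n).1) hN
  have hST : |S| * T ≤ C + M * (Real.log 4 + 4) := by
    calc |S| * T = |L + (S * T - L)| := by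
          rw [add_sub_cancel, abs_mul, abs_of_pos (a := T) (by linarith)]
      _ ≤ |L| + |S * T - L| := abs_add_le _ _
      _ ≤ _ := add_le_add (hC N) (abs_sum_mul_vonMangoldt_mul_sub_le hf N)
  linarith [mul_le_mul_of_nonneg_left hT (abs_nonneg S)]

theorem sum_Ioc_one_add_mul_vonMangoldt_div_le (hf : ∀ n, |f n| ≤ 1) {a b : ℕ}
    (hp : ∀ p : ℕ, p.Prime → p ∈ Ioc a b → f p = -1) :
    ∑ m ∈ Ioc a b, (1 + f m) * (Λ m / m) ≤ 2 * ∑' n : ℕ, if n.Prime then 0 else Λ n / n := by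
  have hΛ (n : ℕ) : 0 ≤ Λ n / n := div_nonneg ArithmeticFunction.vonMangoldt_nonneg n.cast_nonneg
  have hterm (m : ℕ) (hm : m ∈ Ioc a b) :
      (1 + f m) * (Λ m / m) ≤ 2 * if m.Prime then 0 else Λ m / m := by
    split_ifs with hprime
    · simp [hp m hprime hm]
    · exact mul_le_mul_of_nonneg_right (by linarith [(abs_le.1 (hf m)).2]) (hΛ m)
  refine (sum_le_sum hterm).trans ?_
  rw [← mul_sum]
  gcongr
  refine summable_vonMangoldt_div_of_not_prime.sum_le_tsum _ fun n _ ↦ ?_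
  split_ifs
  exacts [le_rfl, hΛ n]

theorem exists_prime_lt_and_le_mul_and_ne_neg_one
    (hf : ∀ n, ∑ k ∈ Ioc 0 n, f k ∈ Set.Icc 0 M) :
    ∃ K : ℕ, ∀ N : ℕ, N ≠ 0 → ∃ p : ℕ, p.Prime ∧ N < p ∧ p ≤ K * N ∧ f p ≠ -1 := by
  obtain ⟨C, hC⟩ := exists_abs_sum_mul_vonMangoldt_div_le hf
  set P := ∑' n : ℕ, if n.Prime then 0 else Λ n / n
  obtain ⟨K, hK⟩ := exists_nat_gt (Real.exp (2 * (Real.log 4 + 4) + 2 * C + 2 * P))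
  have hK_pos : (0 : ℝ) < K := (Real.exp_pos _).trans hK
  have hK_ne : K ≠ 0 := by exact_mod_cast hK_pos.ne'
  refine ⟨K, fun N hN ↦ ?_⟩
  by_contra! hcon
  have hlogK := (Real.lt_log_iff_exp_lt hK_pos).2 hK
  have hsum : ∑ m ∈ Ioc N (K * N), (1 + f m) * (Λ m / m) ≤ 2 * P :=
    sum_Ioc_one_add_mul_vonMangoldt_div_le (abs_le_one_of_sum_mem_Icc hf)
      fun p hp hpN ↦ hcon p hp (mem_Ioc.1 hpN).1 (mem_Ioc.1 hpN).2
  simp only [one_add_mul, sum_add_distrib] at hsum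
  simp only [← mul_div_assoc] at hsum
  have hN_le : N ≤ K * N := Nat.le_mul_of_pos_left N (Nat.pos_of_ne_zero hK_ne)
  have hlogKN : Real.log (K * N : ℕ) = Real.log K + Real.log N := by
    rw [Nat.cast_mul, Real.log_mul hK_pos.ne' (by exact_mod_cast hN)]
  have hΛN := (abs_le.1 (abs_sum_Ioc_vonMangoldt_div_sub_log_le hN)).2
  have hΛKN := (abs_le.1 (abs_sum_Ioc_vonMangoldt_div_sub_log_le (mul_ne_zero hK_ne hN))).1
  have hfN := (abs_le.1 (hC N)).2
  have hfKN := (abs_le.1 (hC (K * N))).1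
  rw [← sum_Ioc_consecutive _ N.zero_le hN_le] at hΛKN hfKN
  linarith

end CompletelyMultiplicative

section Characters

open Finset

theorem periodic_sum_Ioc_zero {R : Type*} [AddCommMonoid R] {c : ℕ → R} {q : ℕ}
    (hc : Function.Periodic c q) (hq : ∑ k ∈ Ioc 0 q, c k = 0) :
    Function.Periodic (fun n ↦ ∑ k ∈ Ioc 0 n, c k) q := by
  intro n
  induction n with
  | zero => simpa using hq
  | succ n ih =>
    dsimp only at ih ⊢
    rw [add_right_comm, sum_Ioc_succ_top (Nat.zero_le _), ih, sum_Ioc_succ_top n.zero_le,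
      add_right_comm, hc]

theorem exists_prime_lt_and_le_mul_and_mulChar_ne_neg_one {q : ℕ} [Fact (1 < q)]
    (χ : MulChar (ZMod q) ℤ) (hsum : ∑ k ∈ Ioc 0 q, χ (k : ℕ) = 0)
    (hnonneg : ∀ n < q, 0 ≤ ∑ k ∈ Ioc 0 n, χ (k : ℕ)) :
    ∃ K : ℕ, ∀ N : ℕ, N ≠ 0 → ∃ p : ℕ, p.Prime ∧ N < p ∧ p ≤ K * N ∧ χ p ≠ -1 := by
  let f : ℕ →*₀ ℝ := (Int.castRingHom ℝ).toMonoidWithZeroHom.comp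
    (χ.toMonoidWithZeroHom.comp (Nat.castRingHom (ZMod q)).toMonoidWithZeroHom)
  have hf (n : ℕ) : f n = (χ n : ℝ) := rfl
  set A : ℕ → ℤ := fun n ↦ ∑ k ∈ Ioc 0 n, χ (k : ℕ)
  have hmod (n : ℕ) : A (n % q) = A n :=
    (periodic_sum_Ioc_zero (fun k ↦ by simp) hsum).map_mod_nat n
  have hlt (n : ℕ) : n % q < q := n.mod_lt (zero_lt_one.trans Fact.out)
  have hmem (n : ℕ) : ∑ k ∈ Ioc 0 n, f k ∈ Set.Icc 0 ((∑ m ∈ range q, A m : ℤ) : ℝ) := by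
    simp only [hf, ← Int.cast_sum]
    rw [← Int.cast_zero, Set.mem_Icc, Int.cast_le, Int.cast_le]
    change 0 ≤ A n ∧ A n ≤ _
    rw [← hmod n]
    exact ⟨hnonneg _ (hlt n), single_le_sum (fun m hm ↦ hnonneg m (mem_range.1 hm))
      (mem_range.2 (hlt n))⟩
  obtain ⟨K, hK⟩ := exists_prime_lt_and_le_mul_and_ne_neg_one hmem
  refine ⟨K, fun N hN ↦ ?_⟩
  obtain ⟨p, hp, hNp, hpK, hfp⟩ := hK N hN
  exact ⟨p, hp, hNp, hpK, fun hχ ↦ hfp (by simp [hf, hχ])⟩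

end Characters

section QuadraticForms

open Finset

-- Thue's lemma, by the pigeonhole principle for `(x, y) ↦ x - t * y` on `[0, √n]²`.
theorem exists_sq_lt_sq_lt_intCast_eq_mul {n : ℕ} (hn : ¬IsSquare n) (t : ZMod n) :
    ∃ x y : ℤ, (x ≠ 0 ∨ y ≠ 0) ∧ x ^ 2 < n ∧ y ^ 2 < n ∧ (x : ZMod n) = t * y := by
  have : NeZero n := ⟨by rintro rfl; exact hn (.zero)⟩
  set k := n.sqrt
  have hk : (k : ℤ) ^ 2 < n := by
    have hne : k * k ≠ n := fun h ↦ hn ⟨k, h.symm⟩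
    rw [sq]
    exact_mod_cast n.sqrt_le.lt_of_ne hne
  obtain ⟨u, hu, v, hv, huv, heq⟩ := exists_ne_map_eq_of_card_lt_of_maps_to
    (s := range (k + 1) ×ˢ range (k + 1)) (t := (univ : Finset (ZMod n)))
    (f := fun w ↦ (w.1 : ZMod n) - t * w.2)
    (by simpa [ZMod.card] using n.lt_succ_sqrt) (fun _ _ ↦ mem_univ _)
  simp only [mem_product, mem_range] at hu hv
  refine ⟨(u.1 : ℤ) - v.1, (u.2 : ℤ) - v.2, ?_, ?_, ?_, ?_⟩
  · by_contra! h
    exact huv (Prod.ext (by lia) (by lia))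
  · exact (sq_le_sq' (by lia) (by lia)).trans_lt hk
  · exact (sq_le_sq' (by lia) (by lia)).trans_lt hk
  · push_cast
    linear_combination heq

theorem exists_sq_add_mul_sq_eq_mul {n d : ℕ} (hn : ¬IsSquare n) (hd : 0 < d)
    (hsq : IsSquare (-d : ZMod n)) :
    ∃ x y c : ℤ, 0 < c ∧ c ≤ d ∧ x ^ 2 + d * y ^ 2 = n * c := by
  obtain ⟨t, ht⟩ := hsq
  obtain ⟨x, y, hxy, hx, hy, heq⟩ := exists_sq_lt_sq_lt_intCast_eq_mul hn t
  obtain ⟨c, hc⟩ : (n : ℤ) ∣ x ^ 2 + d * y ^ 2 := by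
    rw [← ZMod.intCast_zmod_eq_zero_iff_dvd]
    push_cast
    linear_combination (x + t * y : ZMod n) * heq - (y : ZMod n) ^ 2 * ht
  have hpos : 0 < x ^ 2 + d * y ^ 2 := by
    rcases hxy with h | h <;> positivity
  have hlt : (n : ℤ) * c < n * (d + 1) := by
    rw [← hc]
    nlinarith
  have hn_nonneg : (0 : ℤ) ≤ n := n.cast_nonneg
  exact ⟨x, y, c, pos_of_mul_pos_right (hc ▸ hpos) hn_nonneg,
    Int.lt_add_one_iff.1 (lt_of_mul_lt_mul_left hlt hn_nonneg), hc⟩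

theorem exists_eq_sq_add_two_mul_sq {n : ℕ} (hn : ¬IsSquare n)
    (hsq : IsSquare (-2 : ZMod n)) : ∃ x y : ℤ, (n : ℤ) = x ^ 2 + 2 * y ^ 2 := by
  obtain ⟨x, y, c, hc_pos, hc_le, hxy⟩ := exists_sq_add_mul_sq_eq_mul hn two_pos hsq
  push_cast at hc_le hxy
  obtain rfl | rfl : c = 1 ∨ c = 2 := by lia
  · exact ⟨x, y, by linarith⟩
  · obtain ⟨z, rfl⟩ : 2 ∣ x := Int.prime_two.dvd_of_dvd_pow (n := 2) ⟨n - y ^ 2, by linarith⟩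
    exact ⟨y, z, by linarith⟩

end QuadraticForms

section Zsqrtd

open scoped Zsqrtd

theorem zsqrtd_dvd_iff_norm_dvd_im_mul_star {D : ℤ} {z : ℤ√D} (hz : Prime z.norm) (x : ℤ√D) :
    z ∣ x ↔ z.norm ∣ (x * star z).im := by
  constructor
  · rintro ⟨w, rfl⟩
    rw [mul_right_comm, ← Zsqrtd.norm_eq_mul_conj]
    exact ((Zsqrtd.intCast_dvd _ _).1 (dvd_mul_right _ _)).2
  · intro him
    have hre : z.norm ∣ (x * star z).re := by
      have hnorm : (x * star z).norm = x.norm * z.norm := by rw [Zsqrtd.norm_mul, Zsqrtd.norm_conj]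
      refine hz.dvd_of_dvd_pow (n := 2) ?_
      rw [show (x * star z).re ^ 2 = x.norm * z.norm + D * (x * star z).im * (x * star z).im by
        rw [← hnorm, Zsqrtd.norm_def]; ring]
      exact (dvd_mul_left _ _).add (him.mul_left _)
    obtain ⟨w, hw⟩ := (Zsqrtd.intCast_dvd _ _).2 ⟨hre, him⟩
    refine ⟨w, Zsqrtd.eq_of_smul_eq_smul_left hz.ne_zero ?_⟩
    rw [Zsqrtd.norm_eq_mul_conj] at hw ⊢
    linear_combination z * hw

theorem zsqrtd_prime_of_prime_norm {D : ℤ} {z : ℤ√D} (hz : Prime z.norm) : Prime z := by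
  refine ⟨?_, ?_, fun x y hxy ↦ ?_⟩
  · rintro rfl
    exact hz.ne_zero Zsqrtd.norm_zero
  · exact fun hunit ↦ hz.not_isUnit (z.isUnit_iff_norm_isUnit.1 hunit)
  · simp only [zsqrtd_dvd_iff_norm_dvd_im_mul_star hz] at hxy ⊢
    have him : (x * star z).im * (y * star z).im =
        z.norm * (x.im * y.im) - z.im * (x * y * star z).im := by
      simp only [Zsqrtd.norm_def, Zsqrtd.im_mul, Zsqrtd.re_mul, Zsqrtd.re_star, Zsqrtd.im_star]
      ring
    rw [← hz.dvd_mul, him]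
    exact (dvd_mul_right _ _).sub (hxy.mul_left _)

/-- The embedding `a + b√(-d) ↦ a + b √d i` of `ℤ[√-d]` into `ℂ`. -/
noncomputable def zsqrtdNegToComplex (d : ℕ) : ℤ√(-(d : ℤ)) →+* ℂ :=
  Zsqrtd.lift ⟨(Real.sqrt d : ℂ) * Complex.I, by
    have hsqrt : (Real.sqrt d : ℂ) * Real.sqrt d = d := by
      exact_mod_cast Real.mul_self_sqrt d.cast_nonneg
    rw [mul_mul_mul_comm, hsqrt, Complex.I_mul_I, mul_neg_one, Int.cast_neg, Int.cast_natCast]⟩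

variable {d : ℕ}

theorem zsqrtdNegToComplex_apply (z : ℤ√(-(d : ℤ))) :
    zsqrtdNegToComplex d z = z.re + z.im * ((Real.sqrt d : ℂ) * Complex.I) :=
  Zsqrtd.lift_apply_apply _ z

theorem zsqrtdNegToComplex_injective (hd : 0 < d) :
    Function.Injective (zsqrtdNegToComplex d) :=
  Zsqrtd.lift_injective _ fun n ↦ (by nlinarith [mul_self_nonneg n] : -(d : ℤ) < n * n).ne

theorem normSq_zsqrtdNegToComplex (z : ℤ√(-(d : ℤ))) :
    Complex.normSq (zsqrtdNegToComplex d z) = z.norm := by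
  have hsqrt : Real.sqrt d * Real.sqrt d = d := Real.mul_self_sqrt d.cast_nonneg
  have hre : (zsqrtdNegToComplex d z).re = z.re := by simp [zsqrtdNegToComplex_apply]
  have him : (zsqrtdNegToComplex d z).im = z.im * Real.sqrt d := by
    simp [zsqrtdNegToComplex_apply]
  rw [Complex.normSq_apply, hre, him, Zsqrtd.norm_def]
  push_cast
  linear_combination (z.im : ℝ) ^ 2 * hsqrt

theorem range_zsqrtdNegToComplex :
    (zsqrtdNegToComplex d).range = Subring.closure {(Real.sqrt d : ℂ) * Complex.I} := by
  refine le_antisymm ?_ (Subring.closure_le.2 ?_)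
  · rintro _ ⟨z, rfl⟩
    rw [zsqrtdNegToComplex_apply]
    exact add_mem (intCast_mem _ _)
      (mul_mem (intCast_mem _ _) (Subring.mem_closure_of_mem rfl))
  · rintro _ rfl
    exact ⟨Zsqrtd.sqrtd, by simp [zsqrtdNegToComplex_apply]⟩

theorem exists_prime_closure_normSq_eq_norm (hd : 0 < d) {z : ℤ√(-(d : ℤ))}
    (hz : Prime z.norm) :
    ∃ α : Subring.closure {(Real.sqrt d : ℂ) * Complex.I},
      Prime α ∧ Complex.normSq (α : ℂ) = z.norm := by
  rw [← range_zsqrtdNegToComplex]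
  let e : ℤ√(-(d : ℤ)) ≃+* (zsqrtdNegToComplex d).range :=
    RingEquiv.ofBijective (zsqrtdNegToComplex d).rangeRestrict
      ⟨fun _ _ h ↦ zsqrtdNegToComplex_injective hd (congrArg Subtype.val h),
        (zsqrtdNegToComplex d).rangeRestrict_surjective⟩
  exact ⟨e z, (MulEquiv.prime_iff e).2 (zsqrtd_prime_of_prime_norm hz),
    normSq_zsqrtdNegToComplex z⟩

end Zsqrtd

section MainTheorem

open Finset
open scoped Zsqrtd

theorem isSquare_neg_one_of_χ₄_ne_neg_one {p : ℕ} [Fact p.Prime] (hχ : ZMod.χ₄ p ≠ -1) :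
    IsSquare (-1 : ZMod p) :=
  ZMod.exists_sq_eq_neg_one_iff.2 fun hp ↦ hχ (ZMod.χ₄_nat_three_mod_four hp)

theorem isSquare_neg_two_of_χ₈'_ne_neg_one {p : ℕ} [hp : Fact p.Prime] (hχ : ZMod.χ₈' p ≠ -1) :
    IsSquare (-2 : ZMod p) := by
  rcases hp.out.eq_two_or_odd with rfl | hodd
  · exact FiniteField.isSquare_of_char_two (ZMod.ringChar_zmod_n 2) _
  · refine (ZMod.exists_sq_eq_neg_two_iff (by lia)).2 ?_
    by_contra hmod
    rw [ZMod.χ₈'_nat_eq_if_mod_eight, if_neg (by lia), if_neg hmod] at hχ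
    exact hχ rfl

theorem exists_zsqrtd_prime_norm_mem_Icc_of_mulChar {d q : ℕ} [Fact (1 < q)]
    (χ : MulChar (ZMod q) ℤ) (hsum : ∑ k ∈ Ioc 0 q, χ (k : ℕ) = 0)
    (hnonneg : ∀ n < q, 0 ≤ ∑ k ∈ Ioc 0 n, χ (k : ℕ))
    (hrep : ∀ p : ℕ, p.Prime → χ p ≠ -1 → ∃ a b : ℤ, (p : ℤ) = a ^ 2 + d * b ^ 2) :
    ∃ B : ℝ, 1 < B ∧ ∀ x : ℝ, 1 ≤ x →
      ∃ z : ℤ√(-(d : ℤ)), Prime z.norm ∧ (z.norm : ℝ) ∈ Set.Icc x (B * x) := by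
  obtain ⟨K, hK⟩ := exists_prime_lt_and_le_mul_and_mulChar_ne_neg_one χ hsum hnonneg
  have : (0 : ℝ) ≤ K := K.cast_nonneg
  refine ⟨2 * K + 2, by linarith, fun x hx ↦ ?_⟩
  obtain ⟨p, hp, hxp, hpK, hχ⟩ := hK ⌈x⌉₊ (Nat.ceil_pos.2 (by linarith)).ne'
  obtain ⟨a, b, hab⟩ := hrep p hp hχ
  have hnorm : (⟨a, b⟩ : ℤ√(-(d : ℤ))).norm = p := by rw [Zsqrtd.norm_def, hab]; ring
  refine ⟨⟨a, b⟩, hnorm ▸ Nat.prime_iff_prime_int.1 hp, ?_⟩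
  rw [hnorm, Int.cast_natCast]
  refine ⟨(Nat.le_ceil x).trans (by exact_mod_cast hxp.le), ?_⟩
  calc (p : ℝ) ≤ K * ⌈x⌉₊ := by exact_mod_cast hpK
    _ ≤ K * (2 * x) := by
      gcongr
      linarith [Nat.ceil_lt_add_one (zero_le_one.trans hx)]
    _ ≤ (2 * K + 2) * x := by linarith

theorem exists_zsqrtd_neg_one_prime_norm_mem_Icc :
    ∃ B : ℝ, 1 < B ∧ ∀ x : ℝ, 1 ≤ x →
      ∃ z : ℤ√(-((1 : ℕ) : ℤ)), Prime z.norm ∧ (z.norm : ℝ) ∈ Set.Icc x (B * x) := by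
  have : Fact (1 < 4) := ⟨by norm_num⟩
  refine exists_zsqrtd_prime_norm_mem_Icc_of_mulChar ZMod.χ₄ (by decide) (by decide)
    fun p hp hχ ↦ ?_
  have : Fact p.Prime := ⟨hp⟩
  obtain ⟨a, b, hab⟩ :=
    Nat.eq_sq_add_sq_of_isSquare_mod_neg_one (isSquare_neg_one_of_χ₄_ne_neg_one hχ)
  exact ⟨a, b, by rw [hab]; push_cast; ring⟩

theorem exists_zsqrtd_neg_two_prime_norm_mem_Icc :
    ∃ B : ℝ, 1 < B ∧ ∀ x : ℝ, 1 ≤ x →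
      ∃ z : ℤ√(-((2 : ℕ) : ℤ)), Prime z.norm ∧ (z.norm : ℝ) ∈ Set.Icc x (B * x) := by
  have : Fact (1 < 8) := ⟨by norm_num⟩
  refine exists_zsqrtd_prime_norm_mem_Icc_of_mulChar ZMod.χ₈' (by decide) (by decide)
    fun p hp hχ ↦ ?_
  have : Fact p.Prime := ⟨hp⟩
  exact exists_eq_sq_add_two_mul_sq (Nat.prime_iff.1 hp).irreducible.not_isSquare
    (isSquare_neg_two_of_χ₈'_ne_neg_one hχ)

end MainTheorem

/-- For `d = 1` or `d = 2`, there is `B > 1` such that for every real `x > 1`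
there is a prime element `α` of `ℤ[√-d]` (realized as the subring of `ℂ`
generated by `√d * I`) with norm `N(α) = |α|² ∈ [x, B*x]`. -/
theorem stmt_17 (d : ℕ) (hd : d = 1 ∨ d = 2) :
    ∃ B : ℝ, 1 < B ∧ ∀ x : ℝ, 1 < x →
      ∃ α : ↥(Subring.closure {((Real.sqrt d : ℂ) * Complex.I)}), Prime α ∧
        x ≤ Complex.normSq (α : ℂ) ∧ Complex.normSq (α : ℂ) ≤ B * x := by
  have hnorm : ∃ B : ℝ, 1 < B ∧ ∀ x : ℝ, 1 ≤ x →
      ∃ z : Zsqrtd (-(d : ℤ)), Prime z.norm ∧ (z.norm : ℝ) ∈ Set.Icc x (B * x) := by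
    rcases hd with rfl | rfl
    · exact exists_zsqrtd_neg_one_prime_norm_mem_Icc
    · exact exists_zsqrtd_neg_two_prime_norm_mem_Icc
  obtain ⟨B, hB, hnorm⟩ := hnorm
  refine ⟨B, hB, fun x hx ↦ ?_⟩
  obtain ⟨z, hz, hxz, hzB⟩ := hnorm x hx.le
  obtain ⟨α, hα, hαz⟩ := exists_prime_closure_normSq_eq_norm (by lia) hz
  exact ⟨α, hα, hαz ▸ hxz, hαz ▸ hzB⟩
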